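/- For every infinite binary sequence x ∈ B^ℕ, h̲(x) = 1 if and only if γ̲(x) = 1/2. -/

import Mathlib

open Filter Topology

/-- The factor of length `len` of the sequence `x` starting at position `i`. -/
def factor (x : ℕ → Bool) (i len : ℕ) : List Bool :=
  List.ofFn (fun j : Fin len => x (i + j))

/-- Number of (possibly overlapping) occurrences of the word `u`
in the prefix `x[0:n)` of the sequence `x`. -/
def occ (x : ℕ → Bool) (n : ℕ) (u : List Bool) : ℕ :=
  ((Finset.range (n + 1 - u.length)).filter (fun i => factor x i u.length = u)).card

/-- Non-aligned `ℓ`-block entropy of the prefix `x[0:n)`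
(logs are base 2, with the convention `0 · log 0 = 0`). -/
noncomputable def hBlock (ℓ : ℕ) (x : ℕ → Bool) (n : ℕ) : ℝ :=
  -(1 / (ℓ : ℝ)) * ∑ u : Fin ℓ → Bool,
    ((occ x n (List.ofFn u) : ℝ) / ((n : ℝ) - ℓ + 1)) *
      Real.logb 2 ((occ x n (List.ofFn u) : ℝ) / ((n : ℝ) - ℓ + 1))

/-- `h̲(x) = lim_{ℓ→∞} liminf_{n→∞} h_ℓ(x[0:n))` (the limit in `ℓ` exists). -/
noncomputable def hLow (x : ℕ → Bool) : ℝ :=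
  atTop.liminf fun ℓ => atTop.liminf fun n => hBlock ℓ x n

/-- `h̄(x) = lim_{ℓ→∞} limsup_{n→∞} h_ℓ(x[0:n))` (the limit in `ℓ` exists). -/
noncomputable def hUp (x : ℕ → Bool) : ℝ :=
  atTop.limsup fun ℓ => atTop.limsup fun n => hBlock ℓ x n

/-- `γ_ℓ(x[0:n))`: normalized minimal number of prediction errors when predicting
`x[i]` from the preceding `ℓ` symbols `x[i-ℓ:i)`, for `i ∈ {ℓ,…,n-1}`. -/
noncomputable def gammaWord (ℓ : ℕ) (x : ℕ → Bool) (n : ℕ) : ℝ :=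
  (1 / ((n : ℝ) - ℓ)) *
    ((Finset.univ : Finset ((Fin ℓ → Bool) → Bool)).inf' Finset.univ_nonempty
      (fun f => ((((Finset.Ico ℓ n).filter
        (fun i => x i ≠ f (fun j => x (i - ℓ + j)))).card : ℝ))))

/-- `β_ℓ(x[0:n))`: normalized minimal number of prediction errors when predicting
`x[i]` from the following `ℓ` symbols `x[i+1:i+ℓ+1)`, for `i ∈ {0,…,n-ℓ-1}`. -/
noncomputable def betaWord (ℓ : ℕ) (x : ℕ → Bool) (n : ℕ) : ℝ :=
  (1 / ((n : ℝ) - ℓ)) *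
    ((Finset.univ : Finset ((Fin ℓ → Bool) → Bool)).inf' Finset.univ_nonempty
      (fun f => ((((Finset.range (n - ℓ)).filter
        (fun i => x i ≠ f (fun j => x (i + 1 + j)))).card : ℝ))))

/-- `γ̲(x) = lim_{ℓ→∞} liminf_{n→∞} γ_ℓ(x[0:n))` (the limit in `ℓ` exists, by monotonicity). -/
noncomputable def gammaLow (x : ℕ → Bool) : ℝ :=
  atTop.liminf fun ℓ => atTop.liminf fun n => gammaWord ℓ x n

/-- `γ̄(x) = lim_{ℓ→∞} limsup_{n→∞} γ_ℓ(x[0:n))` (the limit in `ℓ` exists, by monotonicity). -/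
noncomputable def gammaUp (x : ℕ → Bool) : ℝ :=
  atTop.limsup fun ℓ => atTop.limsup fun n => gammaWord ℓ x n

/-- `β̲(x) = lim_{ℓ→∞} liminf_{n→∞} β_ℓ(x[0:n))` (the limit in `ℓ` exists, by monotonicity). -/
noncomputable def betaLow (x : ℕ → Bool) : ℝ :=
  atTop.liminf fun ℓ => atTop.liminf fun n => betaWord ℓ x n

/-- `β̄(x) = lim_{ℓ→∞} limsup_{n→∞} β_ℓ(x[0:n))` (the limit in `ℓ` exists, by monotonicity). -/
noncomputable def betaUp (x : ℕ → Bool) : ℝ :=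
  atTop.limsup fun ℓ => atTop.limsup fun n => betaWord ℓ x n

/-- Binary Shannon entropy function `H(α) = -α log α - (1-α) log (1-α)` (base-2 logs). -/
noncomputable def binEntropy (a : ℝ) : ℝ :=
  -(a * Real.logb 2 a) - (1 - a) * Real.logb 2 (1 - a)

/-- Conditional block entropy `Hc^{n,ℓ}(x)`:
`-Σ_{ā ∈ B^ℓ, a ∈ B, p(ā·a) > 0} p(ā·a) · log (p(ā·a)/p(ā))`, where
`p(ā) = occ(x[0:n-1), ā)/(n-ℓ)` and `p(ā·a) = occ(x[0:n), ā·a)/(n-ℓ)`. -/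
noncomputable def condEntropy (ℓ : ℕ) (x : ℕ → Bool) (n : ℕ) : ℝ :=
  -∑ u : Fin ℓ → Bool, ∑ a : Bool,
    (if 0 < ((occ x n (List.ofFn u ++ [a]) : ℝ) / ((n : ℝ) - ℓ)) then
      ((occ x n (List.ofFn u ++ [a]) : ℝ) / ((n : ℝ) - ℓ)) *
        Real.logb 2 (((occ x n (List.ofFn u ++ [a]) : ℝ) / ((n : ℝ) - ℓ)) /
          ((occ x (n - 1) (List.ofFn u) : ℝ) / ((n : ℝ) - ℓ)))
    else 0)

/-- The real number in `[0,1]` denoted by the binary sequence `x`. -/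
noncomputable def val (x : ℕ → Bool) : ℝ :=
  ∑' n : ℕ, (if x n then (1 : ℝ) else 0) / 2 ^ (n + 1)

/-!
A predictor and its complement have error rates that add up to `1`, and a longer memory can simulate
a shorter one, so `gammaLow x = 1 / 2` forces the error rate of every predictor to tend to `1 / 2`.
Comparing the predictor that always guesses `b` with the one that guesses `!b` after the word `u`
and `b` elsewhere shows that `u` followed by `b` is asymptotically half as frequent as `u`. Hence
`x` is normal and all its block entropies tend to `1`.

Conversely, if `gammaLow x < 1 / 2`, then some predictor with memory `k` has an error rate below
some `a < 1 / 2` at infinitely many times. Let it err with probability `a`: this defines a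
probability distribution on words of length `ℓ`. By Gibbs' inequality the entropy of the words of
length `ℓ` is at most their average code length under this distribution, which gives
`hBlock ℓ x n ≤ k / ℓ + binEntropy a` infinitely often, where `binEntropy a < 1`.
-/

section LowerLimits

variable {ι κ : Type*} {F : Filter ι} {G : Filter κ} {a b c : ℝ}

theorem isBoundedUnder_ge_of_mem_Icc {u : ι → ℝ} (hu : ∀ i, u i ∈ Set.Icc a b) :
    F.IsBoundedUnder (· ≥ ·) u :=
  isBoundedUnder_of ⟨a, fun i => (hu i).1⟩

theorem isCoboundedUnder_ge_of_mem_Icc [F.NeBot] {u : ι → ℝ} (hu : ∀ i, u i ∈ Set.Icc a b) :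
    F.IsCoboundedUnder (· ≥ ·) u :=
  (isBoundedUnder_of ⟨b, fun i => (hu i).2⟩ : F.IsBoundedUnder (· ≤ ·) u).isCoboundedUnder_ge

theorem liminf_mem_Icc [F.NeBot] {u : ι → ℝ} (hu : ∀ i, u i ∈ Set.Icc a b) :
    F.liminf u ∈ Set.Icc a b :=
  ⟨le_liminf_of_le (isCoboundedUnder_ge_of_mem_Icc hu) (.of_forall fun i => (hu i).1),
    liminf_le_of_frequently_le (.of_forall fun i => (hu i).2) (isBoundedUnder_ge_of_mem_Icc hu)⟩

variable [G.NeBot] {u : ι → κ → ℝ}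

theorem exists_frequently_lt_of_liminf_liminf_lt [F.NeBot] (hu : ∀ i j, u i j ∈ Set.Icc a b)
    (hc : (F.liminf fun i => G.liminf (u i)) < c) : ∃ i, ∃ᶠ j in G, u i j < c := by
  obtain ⟨i, hi⟩ := (frequently_lt_of_liminf_lt
    (isCoboundedUnder_ge_of_mem_Icc fun i => liminf_mem_Icc (hu i)) hc).exists
  exact ⟨i, frequently_lt_of_liminf_lt (isCoboundedUnder_ge_of_mem_Icc (hu i)) hi⟩

theorem eventually_eventually_lt_of_lt_liminf_liminf (hu : ∀ i j, u i j ∈ Set.Icc a b)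
    (hc : c < F.liminf fun i => G.liminf (u i)) : ∀ᶠ i in F, ∀ᶠ j in G, c < u i j :=
  (eventually_lt_of_lt_liminf hc
    (isBoundedUnder_ge_of_mem_Icc fun i => liminf_mem_Icc (hu i))).mono fun i hi =>
      eventually_lt_of_lt_liminf hi (isBoundedUnder_ge_of_mem_Icc (hu i))

theorem liminf_liminf_le_of_frequently_frequently_le (hu : ∀ i j, u i j ∈ Set.Icc a b)
    (hc : ∃ᶠ i in F, ∃ᶠ j in G, u i j ≤ c) : (F.liminf fun i => G.liminf (u i)) ≤ c :=
  liminf_le_of_frequently_le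
    (hc.mono fun i hi => liminf_le_of_frequently_le hi (isBoundedUnder_ge_of_mem_Icc (hu i)))
    (isBoundedUnder_ge_of_mem_Icc fun i => liminf_mem_Icc (hu i))

end LowerLimits

section Gibbs

theorem sum_mul_logb_le_sum_mul_logb_self {ι : Type*} {s : Finset ι} {p q : ι → ℝ} {b : ℝ}
    (hb : 1 < b) (hp : ∀ i ∈ s, 0 ≤ p i) (hq : ∀ i ∈ s, 0 < q i)
    (hpq : ∑ i ∈ s, q i ≤ ∑ i ∈ s, p i) :
    ∑ i ∈ s, p i * Real.logb b (q i) ≤ ∑ i ∈ s, p i * Real.logb b (p i) := by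
  have termwise : ∀ i ∈ s, p i * Real.log (q i) - p i * Real.log (p i) ≤ q i - p i := by
    intro i hi
    rcases (hp i hi).eq_or_lt with h0 | hpos
    · simpa [← h0] using (hq i hi).le
    · calc p i * Real.log (q i) - p i * Real.log (p i)
          = p i * Real.log (q i / p i) := by
            rw [Real.log_div (hq i hi).ne' hpos.ne', mul_sub]
        _ ≤ p i * (q i / p i - 1) := by
            gcongr
            exact Real.log_le_sub_one_of_pos (div_pos (hq i hi) hpos)
        _ = q i - p i := by field_simp
  have hlog : ∑ i ∈ s, p i * Real.log (q i) ≤ ∑ i ∈ s, p i * Real.log (p i) := by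
    have := Finset.sum_le_sum termwise
    simp only [Finset.sum_sub_distrib] at this
    linarith
  have hb' : 0 ≤ Real.log b := (Real.log_pos hb).le
  simpa only [Real.logb, ← mul_div_assoc, Finset.sum_div] using div_le_div_of_nonneg_right hlog hb'

end Gibbs

section Blocks

variable {α : Type*}

/-- The word of length `ℓ` read in the sequence `x` from position `i` on; the same word as
`factor x i ℓ`, but as a function on `Fin ℓ`, so that words of length `ℓ` form a finite type. -/
def block (x : ℕ → α) (i ℓ : ℕ) : Fin ℓ → α := fun j => x (i + j)

theorem block_succ (x : ℕ → α) (i ℓ : ℕ) :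
    block x i (ℓ + 1) = Fin.snoc (block x i ℓ) (x (i + ℓ)) := by
  funext j
  refine Fin.lastCases ?_ (fun j => ?_) j <;> simp [block]

/-- The number of `i < m` such that the word `u` occurs in the sequence `x` at position `i`.
Here `m` counts starting positions, whereas `occ` is given the length of the prefix. -/
def wordCount [DecidableEq α] (x : ℕ → α) {ℓ : ℕ} (u : Fin ℓ → α) (m : ℕ) : ℕ :=
  Nat.count (fun i => block x i ℓ = u) m

/-- The number of errors that the predictor `f`, which guesses a letter from the `k` preceding
ones, makes on the `m` letters of the sequence `x` following the first `k`. -/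
def errorCount [DecidableEq α] (x : ℕ → α) {k : ℕ} (f : (Fin k → α) → α) (m : ℕ) : ℕ :=
  Nat.count (fun i => x (i + k) ≠ f (block x i k)) m

variable [DecidableEq α]

theorem sum_wordCount_mul [Fintype α] (x : ℕ → α) {ℓ : ℕ} (g : (Fin ℓ → α) → ℝ) (m : ℕ) :
    ∑ u, (wordCount x u m : ℝ) * g u = ∑ i ∈ Finset.range m, g (block x i ℓ) := by
  simp only [wordCount, Nat.count_eq_card_filter_range, ← nsmul_eq_mul, ← Finset.sum_const]
  exact Finset.sum_fiberwise' ..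

theorem sum_wordCount [Fintype α] (x : ℕ → α) (ℓ m : ℕ) :
    ∑ u : Fin ℓ → α, (wordCount x u m : ℝ) = m := by
  simpa using sum_wordCount_mul x (fun _ : Fin ℓ → α => 1) m

theorem errorCount_natAdd_le (x : ℕ → α) {k : ℕ} (d : ℕ) (f : (Fin k → α) → α) (m : ℕ) :
    errorCount x (fun v : Fin (d + k) → α => f fun j => v (Fin.natAdd d j)) m ≤
      errorCount x f (d + m) := by
  have hblock (i : ℕ) : (fun j => block x i (d + k) (Fin.natAdd d j)) = block x (d + i) k := by
    funext j
    simp only [block, Fin.val_natAdd, ← add_assoc, add_comm i d]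
  simp only [errorCount, Nat.count_add, hblock, add_left_comm _ d k, ← add_assoc,
    Nat.le_add_left]

end Blocks

section BinaryCounts

theorem errorCount_add_errorCount_not (x : ℕ → Bool) {k : ℕ} (f : (Fin k → Bool) → Bool) (m : ℕ) :
    errorCount x f m + errorCount x (fun v => !f v) m = m := by
  induction m with
  | zero => simp [errorCount]
  | succ m ih =>
    simp only [errorCount, Bool.ne_not, Nat.count_succ, ne_eq, ite_not] at ih ⊢
    split_ifs <;> omega

-- Predicting `b` everywhere and predicting `b` except after `u` only differ in the errors
-- made after `u`, and there they count the occurrences of `u!b` and of `ub`.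
theorem two_mul_wordCount_snoc (x : ℕ → Bool) {k : ℕ} (u : Fin k → Bool) (b : Bool) (m : ℕ) :
    2 * wordCount x (Fin.snoc u b : Fin (k + 1) → Bool) m +
        errorCount x (fun _ : Fin k → Bool => b) m =
      wordCount x u m + errorCount x (Function.update (fun _ => b) u !b) m := by
  induction m with
  | zero => simp [errorCount, wordCount]
  | succ m ih =>
    simp only [errorCount, wordCount, Nat.count_succ, block_succ, Fin.snoc_inj, add_comm m k]
      at ih ⊢
    by_cases hu : block x m k = u <;> cases x (k + m) <;> cases b <;>
      simp_all [Function.update_apply] <;> omega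

theorem occ_ofFn (x : ℕ → Bool) {ℓ : ℕ} (u : Fin ℓ → Bool) (n : ℕ) :
    occ x n (List.ofFn u) = wordCount x u (n + 1 - ℓ) := by
  rw [occ, List.length_ofFn, wordCount, Nat.count_eq_card_filter_range]
  simp only [factor, List.ofFn_inj]
  rfl

end BinaryCounts

section PredictionError

variable {x : ℕ → Bool} {k : ℕ}

theorem gammaWord_eq_inf' (k : ℕ) (x : ℕ → Bool) (n : ℕ) :
    gammaWord k x n = Finset.univ.inf' Finset.univ_nonempty fun f : (Fin k → Bool) → Bool =>
      (errorCount x f (n - k) : ℝ) / (n - k : ℕ) := by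
  have hcount (f : (Fin k → Bool) → Bool) :
      ((Finset.Ico k n).filter fun i => x i ≠ f fun j => x (i - k + j)).card =
        errorCount x f (n - k) := by
    rw [Finset.card_filter, Finset.sum_Ico_eq_sum_range, errorCount,
      Nat.count_eq_card_filter_range, Finset.card_filter]
    simp only [Nat.add_comm k, Nat.add_sub_cancel]
    rfl
  simp only [gammaWord, hcount]
  rcases le_total k n with hkn | hnk
  · rw [Nat.cast_sub hkn]
    have hscale : 0 ≤ 1 / ((n : ℝ) - k) := by simpa using hkn
    rw [Finset.apply_inf'_eq_inf'_comp Finset.univ_nonempty (1 / ((n : ℝ) - k) * ·)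
      fun s t => mul_min_of_nonneg s t hscale]
    simp only [Function.comp_def, one_div_mul_eq_div]
  · simp [Nat.sub_eq_zero_of_le hnk, errorCount]

theorem gammaWord_le_errorCount_div (f : (Fin k → Bool) → Bool) (n : ℕ) :
    gammaWord k x n ≤ (errorCount x f (n - k) : ℝ) / (n - k : ℕ) := by
  rw [gammaWord_eq_inf']
  exact Finset.inf'_le _ (Finset.mem_univ f)

theorem exists_gammaWord_eq_errorCount_div (k : ℕ) (x : ℕ → Bool) (n : ℕ) :
    ∃ f : (Fin k → Bool) → Bool,
      gammaWord k x n = (errorCount x f (n - k) : ℝ) / (n - k : ℕ) := by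
  rw [gammaWord_eq_inf']
  obtain ⟨f, -, hf⟩ := Finset.exists_mem_eq_inf' Finset.univ_nonempty
    fun f : (Fin k → Bool) → Bool => (errorCount x f (n - k) : ℝ) / (n - k : ℕ)
  exact ⟨f, hf⟩

theorem gammaWord_mem_Icc (k : ℕ) (x : ℕ → Bool) (n : ℕ) :
    gammaWord k x n ∈ Set.Icc 0 (1 / 2) := by
  constructor
  · obtain ⟨f, hf⟩ := exists_gammaWord_eq_errorCount_div k x n
    rw [hf]
    positivity
  · have hsum : (errorCount x (fun _ : Fin k → Bool => true) (n - k) : ℝ) / (n - k : ℕ) +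
        (errorCount x (fun _ : Fin k → Bool => !true) (n - k) : ℝ) / (n - k : ℕ) ≤ 1 := by
      rw [← add_div, ← Nat.cast_add, errorCount_add_errorCount_not]
      exact div_self_le_one _
    linarith [gammaWord_le_errorCount_div (x := x) (fun _ : Fin k → Bool => true) n,
      gammaWord_le_errorCount_div (x := x) (fun _ : Fin k → Bool => !true) n]

theorem gammaLow_mem_Icc (x : ℕ → Bool) : gammaLow x ∈ Set.Icc 0 (1 / 2) :=
  liminf_mem_Icc fun k => liminf_mem_Icc (gammaWord_mem_Icc k x)

end PredictionError

section Normality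

variable {x : ℕ → Bool}

/-- A binary sequence is normal if each word of length `ℓ` occurs in it, at non-aligned
positions, with limiting frequency `(1 / 2) ^ ℓ`. -/
def IsNormal (x : ℕ → Bool) : Prop :=
  ∀ (ℓ : ℕ) (u : Fin ℓ → Bool),
    Tendsto (fun m : ℕ => (wordCount x u m : ℝ) / m) atTop (𝓝 ((1 / 2) ^ ℓ))

theorem eventually_lt_errorCount_div {k : ℕ} (f : (Fin k → Bool) → Bool) {c : ℝ}
    (hc : c < gammaLow x) : ∀ᶠ m : ℕ in atTop, c < errorCount x f m / m := by
  obtain ⟨c', hcc', hc'⟩ := exists_between hc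
  obtain ⟨K, hgamma, hkK⟩ := ((eventually_eventually_lt_of_lt_liminf_liminf
    (fun k => gammaWord_mem_Icc k x) hc').and (eventually_ge_atTop k)).exists
  obtain ⟨d, rfl⟩ := Nat.exists_eq_add_of_le' hkK
  have hlarge : ∀ᶠ m : ℕ in atTop, c * d / (c' - c) < m :=
    tendsto_natCast_atTop_atTop.eventually_gt_atTop _
  rw [← map_add_atTop_eq_nat (d + k)] at hgamma
  rw [← map_add_atTop_eq_nat d]
  simp only [eventually_map] at hgamma ⊢
  filter_upwards [hgamma, hlarge, eventually_gt_atTop 0] with m hm hmd hm0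
  have hm0' : (0 : ℝ) < m := Nat.cast_pos.2 hm0
  have hsuffix : c' * m < errorCount x f (m + d) := by
    have := hm.trans_le
      (gammaWord_le_errorCount_div (fun v : Fin (d + k) → Bool => f fun j => v (Fin.natAdd d j)) _)
    rw [Nat.add_sub_cancel, lt_div_iff₀ hm0'] at this
    rw [add_comm m d]
    exact this.trans_le (Nat.cast_le.2 (errorCount_natAdd_le x d f m))
  rw [div_lt_iff₀ (sub_pos.2 hcc')] at hmd
  rw [lt_div_iff₀ (by positivity)]
  push_cast
  linarith

theorem tendsto_errorCount_div (hx : gammaLow x = 1 / 2) {k : ℕ} (f : (Fin k → Bool) → Bool) :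
    Tendsto (fun m : ℕ => (errorCount x f m : ℝ) / m) atTop (𝓝 (1 / 2)) := by
  refine tendsto_order.2 ⟨fun c hc => eventually_lt_errorCount_div f (hc.trans_eq hx.symm),
    fun c hc => ?_⟩
  have hnot := eventually_lt_errorCount_div (x := x) (c := 1 - c) (fun v => !f v) (by linarith)
  filter_upwards [hnot, eventually_ne_atTop 0] with m hm hm0
  have hsum : (errorCount x f m : ℝ) / m + (errorCount x (fun v => !f v) m : ℝ) / m = 1 := by
    rw [← add_div, ← Nat.cast_add, errorCount_add_errorCount_not, div_self (Nat.cast_ne_zero.2 hm0)]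
  linarith

theorem isNormal_of_gammaLow_eq_half (hx : gammaLow x = 1 / 2) : IsNormal x := by
  intro ℓ
  induction ℓ with
  | zero =>
    intro u
    have hcount (m : ℕ) : wordCount x u m = m := by
      simp [wordCount, Subsingleton.elim _ u]
    simp only [hcount, pow_zero]
    exact tendsto_const_nhds.congr' <| (eventually_ne_atTop 0).mono fun m hm =>
      (div_self (Nat.cast_ne_zero.2 hm)).symm
  | succ k ih =>
    intro w
    obtain ⟨u, b, rfl⟩ : ∃ u : Fin k → Bool, ∃ b, w = Fin.snoc u b :=
      ⟨Fin.init w, w (Fin.last k), (Fin.snoc_init_self w).symm⟩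
    have hlim := (((ih u).add
      (tendsto_errorCount_div hx (Function.update (fun _ => b) u !b))).sub
        (tendsto_errorCount_div hx fun _ : Fin k → Bool => b)).div_const 2
    rw [add_sub_cancel_right, div_eq_mul_one_div, ← pow_succ] at hlim
    refine hlim.congr fun m => ?_
    have hcount : 2 * (wordCount x (Fin.snoc u b : Fin (k + 1) → Bool) m : ℝ) +
        errorCount x (fun _ : Fin k → Bool => b) m =
          wordCount x u m + errorCount x (Function.update (fun _ => b) u !b) m := by
      exact_mod_cast two_mul_wordCount_snoc x u b m
    rw [← add_div, ← hcount]
    ring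

end Normality

section BlockEntropy

variable {x : ℕ → Bool}

theorem hBlock_eq_sum_wordCount (ℓ : ℕ) (x : ℕ → Bool) (n : ℕ) :
    hBlock ℓ x n = -(1 / (ℓ : ℝ)) * ∑ u : Fin ℓ → Bool,
      ((wordCount x u (n + 1 - ℓ) : ℝ) / (n + 1 - ℓ : ℕ)) *
        Real.logb 2 ((wordCount x u (n + 1 - ℓ) : ℝ) / (n + 1 - ℓ : ℕ)) := by
  simp only [hBlock, occ_ofFn]
  rcases le_total ℓ (n + 1) with hℓ | hℓ
  · rw [Nat.cast_sub hℓ, Nat.cast_succ, add_sub_right_comm]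
  · simp [Nat.sub_eq_zero_of_le hℓ, wordCount]

-- By Kraft's inequality `-logb 2 (q u)` is the length of a code word for `u`, so the bound says
-- that no code is on average shorter than the entropy.
theorem hBlock_le_average_neg_logb {ℓ : ℕ} {q : (Fin ℓ → Bool) → ℝ} (hq : ∀ u, 0 < q u)
    (hsum : ∑ u, q u ≤ 1) (x : ℕ → Bool) (n : ℕ) :
    hBlock ℓ x n ≤ 1 / (ℓ : ℝ) *
      ((∑ i ∈ Finset.range (n + 1 - ℓ), -Real.logb 2 (q (block x i ℓ))) / (n + 1 - ℓ : ℕ)) := by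
  rw [hBlock_eq_sum_wordCount]
  generalize n + 1 - ℓ = m
  rcases m.eq_zero_or_pos with rfl | hm
  · simp [wordCount]
  have hfreq : ∑ u : Fin ℓ → Bool, (wordCount x u m : ℝ) / m = 1 := by
    rw [← Finset.sum_div, sum_wordCount, div_self (Nat.cast_ne_zero.2 hm.ne')]
  have hgibbs := sum_mul_logb_le_sum_mul_logb_self one_lt_two
    (s := Finset.univ) (p := fun u : Fin ℓ → Bool => (wordCount x u m : ℝ) / m)
    (fun u _ => by positivity) (fun u _ => hq u) (hsum.trans_eq hfreq.symm)
  have haverage : ∑ u, (wordCount x u m : ℝ) / m * Real.logb 2 (q u) =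
      (∑ i ∈ Finset.range m, Real.logb 2 (q (block x i ℓ))) / m := by
    rw [← sum_wordCount_mul x fun u => Real.logb 2 (q u), Finset.sum_div]
    exact Finset.sum_congr rfl fun u _ => div_mul_eq_mul_div ..
  rw [haverage] at hgibbs
  rw [Finset.sum_neg_distrib, neg_div, mul_neg, neg_mul]
  gcongr

theorem logb_two_half_pow (n : ℕ) : Real.logb 2 ((1 / 2) ^ n) = -n := by
  rw [Real.logb_pow, one_div, Real.logb_inv, Real.logb_self_eq_one one_lt_two, mul_neg_one]

theorem hBlock_mem_Icc (ℓ : ℕ) (x : ℕ → Bool) (n : ℕ) : hBlock ℓ x n ∈ Set.Icc 0 1 := by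
  constructor
  · rw [hBlock_eq_sum_wordCount, neg_mul, ← mul_neg, ← Finset.sum_neg_distrib]
    refine mul_nonneg (by positivity) (Finset.sum_nonneg fun u _ => ?_)
    have hle : (wordCount x u (n + 1 - ℓ) : ℝ) / (n + 1 - ℓ : ℕ) ≤ 1 :=
      div_le_one_of_le₀ (Nat.cast_le.2 (Nat.count_le _)) (Nat.cast_nonneg _)
    exact neg_nonneg.2 <| mul_nonpos_of_nonneg_of_nonpos (by positivity)
      (Real.logb_nonpos one_lt_two (by positivity) hle)
  · refine (hBlock_le_average_neg_logb (q := fun _ => (1 / 2) ^ ℓ) (fun _ => by positivity)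
      (by simp) x n).trans ?_
    simp only [logb_two_half_pow, neg_neg, Finset.sum_const, Finset.card_range, nsmul_eq_mul,
      one_div_mul_eq_div]
    refine div_le_of_le_mul₀ (by positivity) zero_le_one
      (div_le_of_le_mul₀ (by positivity) (by positivity) ?_)
    rw [one_mul, mul_comm]

theorem IsNormal.tendsto_hBlock (hx : IsNormal x) {ℓ : ℕ} (hℓ : ℓ ≠ 0) :
    Tendsto (hBlock ℓ x) atTop (𝓝 1) := by
  have hfreq (u : Fin ℓ → Bool) : Tendsto
      (fun n : ℕ => (wordCount x u (n + 1 - ℓ) : ℝ) / (n + 1 - ℓ : ℕ)) atTop (𝓝 ((1 / 2) ^ ℓ)) :=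
    (hx ℓ u).comp ((tendsto_sub_atTop_nat ℓ).comp (tendsto_add_atTop_nat 1))
  have hlim := (tendsto_finsetSum Finset.univ fun u _ =>
    (hfreq u).mul ((hfreq u).logb (b := 2) (by positivity))).const_mul (-(1 / (ℓ : ℝ)))
  have huniform : -(1 / (ℓ : ℝ)) * ∑ _u : Fin ℓ → Bool,
      (1 / 2 : ℝ) ^ ℓ * Real.logb 2 ((1 / 2) ^ ℓ) = 1 := by
    rw [logb_two_half_pow]
    simp [Nat.cast_ne_zero.2 hℓ]
  rw [huniform] at hlim
  exact hlim.congr fun n => (hBlock_eq_sum_wordCount ℓ x n).symm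

theorem IsNormal.hLow_eq_one (hx : IsNormal x) : hLow x = 1 :=
  (tendsto_const_nhds.congr' <| (eventually_ne_atTop 0).mono fun _ hℓ =>
    (hx.tendsto_hBlock hℓ).liminf_eq.symm).liminf_eq

end BlockEntropy

section ChainRule

variable {α : Type*}

/-- The weight `∏ i < n, κ i (w₀ … wᵢ₋₁) wᵢ` of the word `w` of length `n`, where `κ i v` is the
conditional distribution of the letter at position `i` given that the word `v` precedes it. -/
def chainWeight (κ : ∀ n, (Fin n → α) → α → ℝ) : ∀ n, (Fin n → α) → ℝ
  | 0, _ => 1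
  | n + 1, w => chainWeight κ n (Fin.init w) * κ n (Fin.init w) (w (Fin.last n))

variable {κ : ∀ n, (Fin n → α) → α → ℝ}

theorem chainWeight_pos (hκ : ∀ n v a, 0 < κ n v a) : ∀ n w, 0 < chainWeight κ n w
  | 0, _ => one_pos
  | n + 1, _ => mul_pos (chainWeight_pos hκ n _) (hκ n _ _)

theorem sum_chainWeight [Fintype α] (hκ : ∀ n v, ∑ a, κ n v a = 1) (n : ℕ) :
    ∑ w, chainWeight κ n w = 1 := by
  induction n with
  | zero => simp [chainWeight]
  | succ n ih =>
    rw [← (Fin.snocEquiv fun _ : Fin (n + 1) => α).sum_comp, Fintype.sum_prod_type_right]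
    simp only [chainWeight, Fin.snocEquiv, Equiv.coe_fn_mk, Fin.init_snoc, Fin.snoc_last,
      ← Finset.mul_sum, hκ, mul_one, ih]

theorem logb_chainWeight_block (hκ : ∀ n v a, 0 < κ n v a) (b : ℝ) (x : ℕ → α) (i n : ℕ) :
    Real.logb b (chainWeight κ n (block x i n)) =
      ∑ t ∈ Finset.range n, Real.logb b (κ t (block x i t) (x (i + t))) := by
  induction n with
  | zero => simp [chainWeight]
  | succ n ih =>
    rw [chainWeight, Real.logb_mul (chainWeight_pos hκ ..).ne' (hκ ..).ne', block_succ,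
      Fin.init_snoc, Fin.snoc_last, ih, Finset.sum_range_succ]

end ChainRule

section PredictorCode

variable {k : ℕ} {f : (Fin k → Bool) → Bool} {a : ℝ}

/-- The conditional distribution of the next letter given the word `v` of length `n` in the model
where the first `k` letters are fair coin flips and afterwards the predictor `f` errs with
probability `a`. -/
noncomputable def predictorKernel {k : ℕ} (f : (Fin k → Bool) → Bool) (a : ℝ) (n : ℕ)
    (v : Fin n → Bool) (b : Bool) : ℝ :=
  if h : k ≤ n then
    if b = f fun j => v ⟨n - k + j, by omega⟩ then 1 - a else a
  else 1 / 2

theorem predictorKernel_pos (ha₀ : 0 < a) (ha₁ : a < 1) (n : ℕ) (v : Fin n → Bool) (b : Bool) :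
    0 < predictorKernel f a n v b := by
  unfold predictorKernel
  split_ifs <;> linarith

theorem sum_predictorKernel (n : ℕ) (v : Fin n → Bool) : ∑ b, predictorKernel f a n v b = 1 := by
  by_cases h : k ≤ n
  · cases hf : f fun j => v ⟨n - k + j, by omega⟩ <;> simp [predictorKernel, h, hf]
  · norm_num [predictorKernel, h]

theorem predictorKernel_block (x : ℕ → Bool) (i s : ℕ) :
    predictorKernel f a (s + k) (block x i (s + k)) (x (i + (s + k))) =
      if x (i + s + k) ≠ f (block x (i + s) k) then a else 1 - a := by
  have hsuffix : (fun j : Fin k => block x i (s + k) ⟨s + k - k + j, by omega⟩) =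
      block x (i + s) k := by
    funext j
    simp only [block, Nat.add_sub_cancel, add_assoc]
  simp only [predictorKernel, Nat.le_add_left, dif_pos, hsuffix, ← add_assoc, ne_eq, ite_not]

theorem sum_neg_logb_predictorKernel_le (ha₀ : 0 < a) (ha : a ≤ 1 / 2) {x : ℕ → Bool} {m N t : ℕ}
    (htN : m + t ≤ N + k) (herr : errorCount x f N ≤ a * m) (hkt : k ≤ t) :
    ∑ i ∈ Finset.range m, -Real.logb 2 (predictorKernel f a t (block x i t) (x (i + t))) ≤
      m * binEntropy a := by
  obtain ⟨s, rfl⟩ := Nat.exists_eq_add_of_le' hkt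
  have hletter (i : ℕ) :
      -Real.logb 2 (predictorKernel f a (s + k) (block x i (s + k)) (x (i + (s + k)))) =
        -Real.logb 2 (1 - a) + (Real.logb 2 (1 - a) - Real.logb 2 a) *
          if x (i + s + k) ≠ f (block x (i + s) k) then 1 else 0 := by
    rw [predictorKernel_block]
    split_ifs <;> ring
  have hcount : (∑ i ∈ Finset.range m,
      if x (i + s + k) ≠ f (block x (i + s) k) then (1 : ℝ) else 0) ≤ a * m := by
    rw [Finset.sum_boole, ← Nat.count_eq_card_filter_range]
    refine le_trans (Nat.cast_le.2 ?_) herr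
    calc Nat.count (fun i => x (i + s + k) ≠ f (block x (i + s) k)) m
        ≤ errorCount x f (m + s) := by
          rw [errorCount, Nat.count_add']
          exact Nat.le_add_right ..
      _ ≤ errorCount x f N := Nat.count_monotone _ (by omega)
  have hlog : 0 ≤ Real.logb 2 (1 - a) - Real.logb 2 a :=
    sub_nonneg.2 (Real.logb_le_logb_of_le one_lt_two ha₀ (by linarith))
  simp only [hletter, Finset.sum_add_distrib, ← Finset.mul_sum, Finset.sum_const,
    Finset.card_range, nsmul_eq_mul]
  have := mul_le_mul_of_nonneg_left hcount hlog
  rw [binEntropy]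
  linarith

theorem binEntropy_eq_div_log_two (a : ℝ) : binEntropy a = Real.binEntropy a / Real.log 2 := by
  simp only [binEntropy, Real.binEntropy, Real.logb, Real.log_inv]
  ring

theorem binEntropy_nonneg (ha₀ : 0 ≤ a) (ha₁ : a ≤ 1) : 0 ≤ binEntropy a := by
  rw [binEntropy_eq_div_log_two]
  exact div_nonneg (Real.binEntropy_nonneg ha₀ ha₁) (Real.log_nonneg one_le_two)

theorem sum_neg_logb_chainWeight_predictorKernel_le (ha₀ : 0 < a) (ha : a ≤ 1 / 2) {x : ℕ → Bool}
    {ℓ m N : ℕ} (hmN : m ≤ N + k + 1 - ℓ) (herr : errorCount x f N ≤ a * m) :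
    ∑ i ∈ Finset.range m, -Real.logb 2 (chainWeight (predictorKernel f a) ℓ (block x i ℓ)) ≤
      (k + ℓ * binEntropy a) * m := by
  rcases m.eq_zero_or_pos with rfl | hm
  · simp
  have hposition : ∀ t ∈ Finset.range ℓ,
      ∑ i ∈ Finset.range m, -Real.logb 2 (predictorKernel f a t (block x i t) (x (i + t))) ≤
        m * ((if t < k then 1 else 0) + binEntropy a) := by
    intro t ht
    have htℓ := Finset.mem_range.1 ht
    split_ifs with htk
    · simpa [predictorKernel, htk.not_ge] using le_mul_of_one_le_right m.cast_nonneg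
        (le_add_of_nonneg_right (binEntropy_nonneg ha₀.le (by linarith)))
    · rw [zero_add]
      exact sum_neg_logb_predictorKernel_le ha₀ ha (by omega) herr (not_lt.1 htk)
  have hcard : ((Finset.range ℓ).filter (· < k)).card ≤ k :=
    (Finset.card_le_card fun t ht => Finset.mem_range.2 (Finset.mem_filter.1 ht).2).trans_eq
      (Finset.card_range k)
  calc ∑ i ∈ Finset.range m, -Real.logb 2 (chainWeight (predictorKernel f a) ℓ (block x i ℓ))
      = ∑ t ∈ Finset.range ℓ, ∑ i ∈ Finset.range m,
          -Real.logb 2 (predictorKernel f a t (block x i t) (x (i + t))) := by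
        simp only [logb_chainWeight_block (predictorKernel_pos ha₀ (by linarith)),
          ← Finset.sum_neg_distrib]
        exact Finset.sum_comm
    _ ≤ ∑ t ∈ Finset.range ℓ, m * ((if t < k then 1 else 0) + binEntropy a) :=
        Finset.sum_le_sum hposition
    _ = (((Finset.range ℓ).filter (· < k)).card + ℓ * binEntropy a) * m := by
        rw [← Finset.mul_sum, Finset.sum_add_distrib, Finset.sum_boole, Finset.sum_const,
          Finset.card_range, nsmul_eq_mul, mul_comm]
    _ ≤ (k + ℓ * binEntropy a) * m := by gcongr

theorem hBlock_le_of_errorCount_le (ha₀ : 0 < a) (ha : a ≤ 1 / 2) {x : ℕ → Bool} {ℓ n : ℕ}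
    (herr : errorCount x f (n - k) ≤ a * (n + 1 - ℓ : ℕ)) :
    hBlock ℓ x n ≤ k / ℓ + binEntropy a := by
  have hentropy := binEntropy_nonneg ha₀.le (by linarith)
  have hpos := predictorKernel_pos (f := f) ha₀ (by linarith)
  have hmN : n + 1 - ℓ ≤ n - k + k + 1 - ℓ := by omega
  have htotal := sum_neg_logb_chainWeight_predictorKernel_le ha₀ ha hmN herr
  calc hBlock ℓ x n
      ≤ 1 / (ℓ : ℝ) * ((∑ i ∈ Finset.range (n + 1 - ℓ),
          -Real.logb 2 (chainWeight (predictorKernel f a) ℓ (block x i ℓ))) / (n + 1 - ℓ : ℕ)) :=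
        hBlock_le_average_neg_logb (chainWeight_pos hpos ℓ)
          (sum_chainWeight sum_predictorKernel ℓ).le x n
    _ ≤ 1 / (ℓ : ℝ) * (k + ℓ * binEntropy a) := by
        gcongr
        exact div_le_of_le_mul₀ (by positivity) (by positivity) htotal
    _ = k / ℓ + ℓ / ℓ * binEntropy a := by ring
    _ ≤ k / ℓ + binEntropy a := by
        gcongr
        exact mul_le_of_le_one_left hentropy (div_self_le_one _)

end PredictorCode

section LowPredictionError

variable {x : ℕ → Bool}

theorem frequently_hBlock_le_of_frequently_gammaWord_lt {a b : ℝ} (hab : b < a) (ha₀ : 0 < a)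
    (ha : a ≤ 1 / 2) {k : ℕ} (hgamma : ∃ᶠ n in atTop, gammaWord k x n < b) (ℓ : ℕ) :
    ∃ᶠ n in atTop, hBlock ℓ x n ≤ k / ℓ + binEntropy a := by
  have hlarge : ∀ᶠ n : ℕ in atTop, (a * (ℓ - 1) - b * k) / (a - b) < n :=
    tendsto_natCast_atTop_atTop.eventually_gt_atTop _
  refine (hgamma.and_eventually (hlarge.and (eventually_gt_atTop (k + ℓ)))).mono ?_
  rintro n ⟨hn, hlarge, hkℓ⟩
  obtain ⟨f, hf⟩ := exists_gammaWord_eq_errorCount_div k x n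
  refine hBlock_le_of_errorCount_le (f := f) ha₀ ha ?_
  rw [hf, div_lt_iff₀ (Nat.cast_pos.2 (by omega))] at hn
  rw [div_lt_iff₀ (sub_pos.2 hab)] at hlarge
  rw [Nat.cast_sub (by omega)] at hn ⊢
  push_cast
  linarith

theorem binEntropy_lt_one {a : ℝ} (ha : a ≠ 1 / 2) : binEntropy a < 1 := by
  rw [binEntropy_eq_div_log_two, div_lt_one (Real.log_pos one_lt_two), Real.binEntropy_lt_log_two]
  rwa [← one_div]

theorem hLow_lt_one_of_gammaLow_lt_half (hx : gammaLow x < 1 / 2) : hLow x < 1 := by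
  obtain ⟨b, hxb, hb⟩ := exists_between hx
  obtain ⟨a, hba, ha⟩ := exists_between hb
  have ha₀ : 0 < a := (gammaLow_mem_Icc x).1.trans_lt (hxb.trans hba)
  obtain ⟨k, hk⟩ :=
    exists_frequently_lt_of_liminf_liminf_lt (fun k => gammaWord_mem_Icc k x) hxb
  obtain ⟨c, hac, hc⟩ := exists_between (binEntropy_lt_one ha.ne)
  have hlim : Tendsto (fun ℓ : ℕ => (k : ℝ) / ℓ + binEntropy a) atTop (𝓝 (binEntropy a)) := by
    simpa using (tendsto_const_div_atTop_nhds_zero_nat (k : ℝ)).add_const (binEntropy a)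
  have hle : ∀ᶠ ℓ : ℕ in atTop, ∃ᶠ n in atTop, hBlock ℓ x n ≤ c :=
    (hlim.eventually_le_const hac).mono fun ℓ hℓ =>
      (frequently_hBlock_le_of_frequently_gammaWord_lt hba ha₀ ha.le hk ℓ).mono
        fun _ hn => hn.trans hℓ
  exact (liminf_liminf_le_of_frequently_frequently_le (fun ℓ => hBlock_mem_Icc ℓ x)
    hle.frequently).trans_lt hc

end LowPredictionError

theorem hLow_eq_one_iff_gammaLow_eq_half (x : ℕ → Bool) :
    hLow x = 1 ↔ gammaLow x = 1 / 2 := by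
  refine ⟨fun hx => ?_, fun hx => (isNormal_of_gammaLow_eq_half hx).hLow_eq_one⟩
  refine (gammaLow_mem_Icc x).2.antisymm (not_lt.1 fun hlt => ?_)
  exact (hLow_lt_one_of_gammaLow_lt_half hlt).ne hx
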